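/- arXiv:1203.6313 — 4 statements merged into one kernel-verified Lean document; each statement's English description precedes it below -/
import Mathlib

section
/- Let K be any subfield of ℂ. Then the fixed field of the group Aut(ℂ/K) of field automorphisms of ℂ that fix K pointwise is exactly K: if z ∈ ℂ satisfies η(z) = z for every field automorphism η of ℂ with η|_K = id, then z ∈ K. -/
open IntermediateField in
theorem algCase {F : Type*} [Field F] [CharZero F] [Algebra F ℂ] (z : ℂ) (ha : IsAlgebraic F z)
    (hz : ∀ η : ℂ ≃ₐ[F] ℂ, η z = z) : ∃ k : F, algebraMap F ℂ k = z := by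
  obtain ⟨s, hs⟩ := exists_isTranscendenceBasis F ℂ
  have halg := hs.isAlgebraic_field
  set L := IntermediateField.adjoin F (Set.range ((↑) : s → ℂ)) with hL
  have hcl : IsAlgClosure L ℂ := ⟨inferInstance, halg⟩
  have hn : Normal L ℂ := IsAlgClosure.normal L ℂ
  have : IsGalois L ℂ := IsGalois.mk
  have hzL : z ∈ L := by
    obtain ⟨y, hy⟩ := (InfiniteGalois.mem_range_algebraMap_iff_fixed (k := L) z).2
      (fun f => hz (f.restrictScalars F))
    rw [← hy]; exact y.2
  rw [hL, IntermediateField.mem_adjoin_range_iff] at hzL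
  obtain ⟨p, q, hpq⟩ := hzL
  by_cases hq : MvPolynomial.aeval ((↑) : s → ℂ) q = 0
  · exact ⟨0, by rw [hpq, hq]; simp⟩
  have hi : AlgebraicIndependent (algebraicClosure F ℂ) ((↑) : s → ℂ) := hs.1.extendScalars _
  let w : algebraicClosure F ℂ := ⟨z, mem_algebraicClosure_iff.2 ha⟩
  have h0 : MvPolynomial.C w * MvPolynomial.map (algebraMap F (algebraicClosure F ℂ)) q
     = MvPolynomial.map (algebraMap F (algebraicClosure F ℂ)) p := by
    apply hi
    rw [map_mul, MvPolynomial.aeval_map_algebraMap, MvPolynomial.aeval_map_algebraMap,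
      MvPolynomial.aeval_C]
    change z * _ = _
    rw [hpq]
    field_simp
  have hq0 : q ≠ 0 := by rintro rfl; simp at hq
  obtain ⟨m, hm⟩ := MvPolynomial.ne_zero_iff.1 hq0
  have h1 := congrArg (fun r => ((MvPolynomial.coeff m r : algebraicClosure F ℂ) : ℂ)) h0
  simp only [MvPolynomial.coeff_C_mul, MvPolynomial.coeff_map] at h1
  change z * algebraMap F ℂ _ = algebraMap F ℂ _ at h1
  have hm' : algebraMap F ℂ (q.coeff m) ≠ 0 := by simpa using hm
  refine ⟨p.coeff m / q.coeff m, ?_⟩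
  rw [map_div₀, ← h1]
  field_simp

open IntermediateField Polynomial in
theorem fixedCase {F : Type*} [Field F] [CharZero F] [Algebra F ℂ] (z : ℂ)
    (hz : ∀ η : ℂ ≃ₐ[F] ℂ, η z = z) : ∃ k : F, algebraMap F ℂ k = z := by
  by_cases ha : IsAlgebraic F z
  · exact algCase z ha hz
  exfalso
  have hsq : IsAlgebraic F⟮z ^ 2⟯ z := by
    refine IsIntegral.isAlgebraic (IsIntegral.of_pow (n := 2) (by norm_num) ?_)
    exact isIntegral_algebraMap (x := (⟨z ^ 2, mem_adjoin_simple_self F _⟩ : F⟮z ^ 2⟯))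
  obtain ⟨k, hk⟩ := algCase (F := F⟮z ^ 2⟯) z hsq (fun η => hz (η.restrictScalars F))
  have hmem : z ∈ F⟮z ^ 2⟯ := by
    have h := k.2
    change algebraMap F⟮z ^ 2⟯ ℂ k ∈ F⟮z ^ 2⟯ at h
    rwa [hk] at h
  rw [mem_adjoin_simple_iff] at hmem
  obtain ⟨a, b, hab⟩ := hmem
  have hz0 : z ≠ 0 := by rintro h; exact ha (h ▸ isAlgebraic_zero)
  have hb : aeval (z ^ 2) b ≠ 0 := by
    intro h; rw [h, div_zero] at hab; exact hz0 hab
  have htr : Transcendental F z := ha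
  have heq : X * expand F 2 b = expand F 2 a := by
    apply transcendental_iff_injective.1 htr
    rw [map_mul, aeval_X, expand_aeval, expand_aeval]
    rwa [eq_div_iff hb] at hab
  have hb0 : b ≠ 0 := by rintro rfl; simp at hb
  have hd := congrArg natDegree heq
  rw [natDegree_X_mul (by rwa [Ne, expand_eq_zero (by norm_num)]), natDegree_expand,
    natDegree_expand] at hd
  omega



/-- Let `K` be any subfield of `ℂ`.  The fixed field of the group of field
automorphisms of `ℂ` fixing `K` pointwise is exactly `K`: if `z ∈ ℂ` satisfies `η z = z` for
every field automorphism `η` of `ℂ` with `η|_K = id`, then `z ∈ K`. -/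
theorem stmt4 (K : Subfield ℂ) (z : ℂ)
    (hz : ∀ η : ℂ ≃+* ℂ, (∀ k ∈ K, η k = k) → η z = z) :
    z ∈ K := by

  obtain ⟨k, hk⟩ := fixedCase (F := K) z
    (fun η => hz η.toRingEquiv (fun k hk => η.commutes ⟨k, hk⟩))
  rw [← hk]
  exact k.2
end

section
/- Let U/K be a finite Galois extension of subfields of ℂ of degree m, with Gal(U/K) = {σ₁,…,σₘ} and K-basis e₁,…,eₘ of U. Let Y ⊆ ℂⁿ be the common zero set of polynomials P₁,…,P_s ∈ U[x₁,…,xₙ]. Suppose that for every field automorphism η of ℂ fixing K pointwise, the coordinatewise image η̂(Y) equals Y. Then Y is also the common zero set of the polynomials Tr(eᵢPⱼ) = Σₖ₌₁ᵐ (eᵢPⱼ)^{σₖ}, for 1 ≤ i ≤ m and 1 ≤ j ≤ s, and all of these polynomials have coefficients in K; in particular Y is defined over K. -/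
set_option synthInstance.maxHeartbeats 1000000
set_option maxHeartbeats 1000000

theorem exists_extend_aut (U : Subfield ℂ) (τ : U ≃+* U) :
    ∃ η : ℂ ≃+* ℂ, ∀ u : U, η (u : ℂ) = (τ u : ℂ) := by
  obtain ⟨S, hS⟩ := exists_isTranscendenceBasis U ℂ
  letI := IsAlgClosed.isAlgClosure_of_transcendence_basis _ hS
  let E : Algebra.adjoin U (Set.range ((↑) : S → ℂ)) ≃+*
      Algebra.adjoin U (Set.range ((↑) : S → ℂ)) :=
    (hS.1.aevalEquiv.symm.toRingEquiv.trans (MvPolynomial.mapEquiv S τ)).trans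
      hS.1.aevalEquiv.toRingEquiv
  refine ⟨IsAlgClosure.equivOfEquiv ℂ ℂ E, fun u => ?_⟩
  have h := IsAlgClosure.equivOfEquiv_algebraMap ℂ ℂ E (algebraMap U _ u)
  have h2 : E (algebraMap U _ u) = algebraMap U _ (τ u) := by
    change hS.1.aevalEquiv (MvPolynomial.mapEquiv S τ
      (hS.1.aevalEquiv.symm (algebraMap U _ u))) = _
    have h3 : hS.1.aevalEquiv.symm (algebraMap U _ u) = MvPolynomial.C u :=
      hS.1.aevalEquiv.symm.commutes u
    have h4 : MvPolynomial.mapEquiv S τ (MvPolynomial.C u) = MvPolynomial.C (τ u) :=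
      MvPolynomial.map_C _ u
    exact (congrArg (fun t => hS.1.aevalEquiv (MvPolynomial.mapEquiv S τ t)) h3).trans
      ((congrArg hS.1.aevalEquiv h4).trans (hS.1.aevalEquiv.commutes (τ u)))
  rw [h2] at h
  exact h

/-- Let `U/K` be a finite Galois extension of subfields of `ℂ` of degree `m`,
with `Gal(U/K) = {σ₁,…,σₘ}` and `K`-basis `e₁,…,eₘ` of `U`.  Let `Y ⊆ ℂⁿ` be the common zero
set of `P₁,…,P_s ∈ U[x₁,…,xₙ]` and suppose `η̂(Y) = Y` for every field automorphism `η` of `ℂ`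
fixing `K` pointwise.  Then `Y` is also the common zero set of the polynomials
`Tr(eᵢ Pⱼ) = Σₖ (eᵢ Pⱼ)^{σₖ}`, all of whose coefficients lie in `K`;
in particular `Y` is defined over `K`. -/
theorem stmt7 (K : Subfield ℂ) (U : IntermediateField K ℂ)
    [FiniteDimensional K U] [IsGalois K U]
    (n s m : ℕ) (hm : m = Module.finrank K U)
    (σ : Fin m → (U ≃ₐ[K] U)) (hσ : Function.Bijective σ)
    (e : Module.Basis (Fin m) K U)
    (P : Fin s → MvPolynomial (Fin n) U)
    (Y : Set (Fin n → ℂ))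
    (hY : Y = {y | ∀ j : Fin s, MvPolynomial.eval₂ U.val.toRingHom y (P j) = 0})
    (hinv : ∀ η : ℂ ≃+* ℂ, (∀ k ∈ K, η k = k) →
      (fun y : Fin n → ℂ => fun i => η (y i)) '' Y = Y) :
    (Y = {y | ∀ (i : Fin m) (j : Fin s),
        MvPolynomial.eval₂ U.val.toRingHom y
          (∑ k : Fin m,
            MvPolynomial.map (σ k).toAlgHom.toRingHom
              (MvPolynomial.C (e i) * P j)) = 0}) ∧
    (∀ (i : Fin m) (j : Fin s) (d : Fin n →₀ ℕ),
      ((((∑ k : Fin m,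
            MvPolynomial.map (σ k).toAlgHom.toRingHom
              (MvPolynomial.C (e i) * P j)).coeff d : ↥U) : ℂ)) ∈ K) := by
  classical
  have key : ∀ (y : Fin n → ℂ) (i : Fin m) (j : Fin s),
      MvPolynomial.eval₂ U.val.toRingHom y
          (∑ k : Fin m, MvPolynomial.map (σ k).toAlgHom.toRingHom
              (MvPolynomial.C (e i) * P j)) =
        ∑ k : Fin m, ((σ k (e i) : U) : ℂ) * MvPolynomial.eval₂ U.val.toRingHom y
          (MvPolynomial.map (σ k).toAlgHom.toRingHom (P j)) := by
    intro y i j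
    rw [← MvPolynomial.coe_eval₂Hom, map_sum]
    refine Finset.sum_congr rfl fun k _ => ?_
    rw [map_mul, map_mul, MvPolynomial.map_C, MvPolynomial.coe_eval₂Hom, MvPolynomial.eval₂_C]
    rfl
  refine ⟨?_, ?_⟩
  · ext y
    constructor
    · intro hy i j
      rw [key]
      refine Finset.sum_eq_zero fun k _ => ?_
      obtain ⟨η, hη⟩ := exists_extend_aut U.toSubfield (σ k).toRingEquiv
      have hK : ∀ x ∈ K, η x = x := by
        intro x hx
        have h1 := hη (algebraMap K U ⟨x, hx⟩)
        have h2 : (σ k).toRingEquiv (algebraMap K U ⟨x, hx⟩) = algebraMap K U ⟨x, hx⟩ :=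
          (σ k).commutes _
        exact h1.trans (congrArg (fun u : U => (u : ℂ)) h2)
      rw [← hinv η hK] at hy
      obtain ⟨z, hz, rfl⟩ := hy
      rw [hY] at hz
      have hzj : MvPolynomial.eval₂ U.val.toRingHom z (P j) = 0 := hz j
      have h3 : MvPolynomial.eval₂ U.val.toRingHom (fun i => η (z i))
          (MvPolynomial.map (σ k).toAlgHom.toRingHom (P j)) =
          η (MvPolynomial.eval₂ U.val.toRingHom z (P j)) := by
        rw [MvPolynomial.eval₂_map]
        have h4 := MvPolynomial.eval₂_comp_left η.toRingHom U.val.toRingHom z (P j)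
        have h5 : U.val.toRingHom.comp (σ k).toAlgHom.toRingHom =
            η.toRingHom.comp U.val.toRingHom := by
          ext u
          exact (hη u).symm
        rw [h5]
        exact h4.symm
      have h6 := h3.trans ((congrArg η hzj).trans (map_zero η))
      exact (congrArg _ h6).trans (mul_zero _)
    · intro hy
      rw [hY]
      intro j
      let Q : Fin m → ℂ := fun k => MvPolynomial.eval₂ U.val.toRingHom y
          (MvPolynomial.map (σ k).toAlgHom.toRingHom (P j))
      have hQ : ∀ i, ∑ k, ((σ k (e i) : U) : ℂ) * Q k = 0 := fun i => by
        have := hy i j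
        rwa [key] at this
      let L : U →ₗ[K] ℂ := ∑ k, Q k • (U.val.toLinearMap.comp (σ k).toLinearMap)
      have hLapp : ∀ u, L u = ∑ k, Q k * ((σ k u : U) : ℂ) := by
        intro u
        simp [L]
      have hL : L = 0 := by
        apply e.ext
        intro i
        rw [hLapp, LinearMap.zero_apply, ← hQ i]
        exact Finset.sum_congr rfl fun k _ => mul_comm _ _
      let χ : Fin m → (U →* ℂ) := fun k => (U.val.comp (σ k).toAlgHom : U →* ℂ)
      have hχ : Function.Injective χ := by
        intro a b hab
        apply hσ.1
        ext u
        exact DFunLike.congr_fun hab u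
      have hli := (linearIndependent_monoidHom U ℂ).comp χ hχ
      have hQ0 := Fintype.linearIndependent_iff.1 hli Q (by
        funext u
        have := hLapp u
        rw [hL] at this
        simp only [Finset.sum_apply, Pi.smul_apply, smul_eq_mul]
        exact this.symm)
      obtain ⟨k, hk⟩ := hσ.2 1
      have := hQ0 k
      simp only [Q, hk] at this
      rw [← this]
      congr 1
      exact (MvPolynomial.map_id (P j)).symm
  · intro i j d
    have h : (∑ k : Fin m, MvPolynomial.map (σ k).toAlgHom.toRingHom
              (MvPolynomial.C (e i) * P j)).coeff d =
        algebraMap K U (Algebra.trace K U ((MvPolynomial.C (e i) * P j).coeff d)) := by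
      rw [trace_eq_sum_automorphisms, MvPolynomial.coeff_sum]
      rw [← (Equiv.ofBijective σ hσ).sum_comp]
      refine Finset.sum_congr rfl fun k _ => ?_
      rw [MvPolynomial.coeff_map]
      rfl
    rw [h]
    exact (Algebra.trace K U ((MvPolynomial.C (e i) * P j).coeff d)).2
end

section
/- Let n ≥ 1 and define Ψ : ℂⁿ × ℂⁿ → ℂ^{3n−1} by Ψ(x,z) = (x₁+z₁, …, xₙ+zₙ, x₁z₁, …, xₙzₙ, x₁x₂+z₁z₂, …, x₁xₙ+z₁zₙ). Then (a) Ψ(z,x) = Ψ(x,z) for all x, z ∈ ℂⁿ; and (b) if (x,z), (x′,z′) ∈ ℂⁿ × ℂⁿ satisfy Ψ(x,z) = Ψ(x′,z′) and x₁ ≠ z₁, then (x,z) = (x′,z′) or (x,z) = (z′,x′). In particular, Ψ is injective on any subset A ⊆ ℂⁿ × ℂⁿ all of whose points (x,z) satisfy x₁ ≠ z₁ and whose image under the swap (x,z) ↦ (z,x) meets A only in points fixed by the swap. -/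
/-- The map `Ψ : ℂⁿ × ℂⁿ → ℂ^{3n−1}` whose coordinates are the invariants
`tᵢ = xᵢ + zᵢ` (`1 ≤ i ≤ n`), `t_{n+i} = xᵢ zᵢ` (`1 ≤ i ≤ n`) and
`t_{2n+k−1} = x₁ x_k + z₁ z_k` (`2 ≤ k ≤ n`) of the swap `(x,z) ↦ (z,x)`. -/
noncomputable def Psi (n : ℕ) [NeZero n] :
    (Fin n → ℂ) × (Fin n → ℂ) →
      (Fin n → ℂ) × (Fin n → ℂ) × ({k : Fin n // k ≠ 0} → ℂ) :=
  fun p =>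
    (fun i => p.1 i + p.2 i,
     fun i => p.1 i * p.2 i,
     fun k => p.1 0 * p.1 k.1 + p.2 0 * p.2 k.1)

/-- For `n ≥ 1` and `Ψ` as above:
(a) `Ψ(z,x) = Ψ(x,z)`;
(b) if `Ψ(x,z) = Ψ(x′,z′)` and `x₁ ≠ z₁` then `(x,z) = (x′,z′)` or `(x,z) = (z′,x′)`;
in particular, `Ψ` is injective on any subset `A` all of whose points satisfy `x₁ ≠ z₁` and
whose image under the swap meets `A` only in points fixed by the swap. -/
theorem stmt10 (n : ℕ) [NeZero n] :
    (∀ x z : Fin n → ℂ, Psi n (z, x) = Psi n (x, z)) ∧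
    (∀ x z x' z' : Fin n → ℂ, Psi n (x, z) = Psi n (x', z') → x 0 ≠ z 0 →
        (x, z) = (x', z') ∨ (x, z) = (z', x')) ∧
    (∀ A : Set ((Fin n → ℂ) × (Fin n → ℂ)),
        (∀ p ∈ A, p.1 0 ≠ p.2 0) →
        (∀ p ∈ A, (p.2, p.1) ∈ A → (p.2, p.1) = p) →
        Set.InjOn (Psi n) A) := by
  have key : ∀ x z x' z' : Fin n → ℂ, Psi n (x, z) = Psi n (x', z') → x 0 ≠ z 0 →
      x 0 = x' 0 → (x, z) = (x', z') := by
    intro x z x' z' h hne h0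
    simp only [Psi, Prod.mk.injEq] at h
    obtain ⟨h1, _, h3⟩ := h
    have hs : ∀ i, x i + z i = x' i + z' i := fun i => congrFun h1 i
    have hz0 : z 0 = z' 0 := by linear_combination hs 0 - h0
    have hx : ∀ i, x i = x' i := by
      intro i
      by_cases hi : i = 0
      · rw [hi, h0]
      · have h4 : x 0 * x i + z 0 * z i = x' 0 * x' i + z' 0 * z' i := congrFun h3 ⟨i, hi⟩
        rw [← h0, ← hz0] at h4
        apply mul_left_cancel₀ (sub_ne_zero.mpr hne)
        linear_combination h4 - z 0 * hs i
    have hz : ∀ i, z i = z' i := fun i => by linear_combination hs i - hx i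
    rw [funext hx, funext hz]
  have ha : ∀ x z : Fin n → ℂ, Psi n (z, x) = Psi n (x, z) := by
    intro x z
    simp only [Psi, Prod.mk.injEq]
    refine ⟨?_, ?_, ?_⟩ <;> funext i <;> ring
  have hb : ∀ x z x' z' : Fin n → ℂ, Psi n (x, z) = Psi n (x', z') → x 0 ≠ z 0 →
        (x, z) = (x', z') ∨ (x, z) = (z', x') := by
    intro x z x' z' h hne
    have h1 : x 0 + z 0 = x' 0 + z' 0 := congrFun (congrArg Prod.fst h) 0
    have h2 : x 0 * z 0 = x' 0 * z' 0 := congrFun (congrArg (fun p => p.2.1) h) 0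
    have h3 : (x 0 - x' 0) * (x 0 - z' 0) = 0 := by
      linear_combination x 0 * h1 - h2
    rcases mul_eq_zero.mp h3 with h4 | h4
    · exact Or.inl (key x z x' z' h hne (sub_eq_zero.mp h4))
    · exact Or.inr (key x z z' x' (h.trans (ha z' x')) hne (sub_eq_zero.mp h4))
  refine ⟨ha, hb, ?_⟩
  rintro A hA hsw ⟨x, z⟩ hp ⟨x', z'⟩ hq h
  rcases hb x z x' z' h (hA _ hp) with h1 | h1
  · exact h1
  · have h2 := hsw (x', z') hq (h1 ▸ hp)
    exact h1.trans h2
end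

section
/- Let X ⊆ ℂ⁴ be defined by 1 + x₁² + x₂² = 0, −1 + x₁² + x₃² = 0, i + x₁² + x₄² = 0, and let Y ⊆ ℂ⁴ be defined by the rational-coefficient equations 4 + w₂² − w₃² = 0, w₁² + w₂w₃ = 0, w₁² + w₄² − 2 = 0. Then the map T(x₁,x₂,x₃,x₄) = ((1+i)x₁, x₂ + i x₃, x₃ + i x₂, (1+i)x₄) sends X into Y, the map S(w₁,w₂,w₃,w₄) = (w₁/(1+i), (w₂ − i w₃)/2, (w₃ − i w₂)/2, w₄/(1+i)) sends Y into X, and S ∘ T = id on ℂ⁴ and T ∘ S = id on ℂ⁴; hence T restricts to a bijection from X onto Y, exhibiting a model of X defined over ℚ. -/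
/-- The curve `X ⊆ ℂ⁴` defined by `1 + x₁² + x₂² = 0`, `−1 + x₁² + x₃² = 0`,
`i + x₁² + x₄² = 0`. -/
def XCurve : Set (ℂ × ℂ × ℂ × ℂ) :=
  {p | 1 + p.1 ^ 2 + p.2.1 ^ 2 = 0 ∧
       -1 + p.1 ^ 2 + p.2.2.1 ^ 2 = 0 ∧
       Complex.I + p.1 ^ 2 + p.2.2.2 ^ 2 = 0}

/-- The rational model `Y ⊆ ℂ⁴` defined by `4 + w₂² − w₃² = 0`, `w₁² + w₂ w₃ = 0`,
`w₁² + w₄² − 2 = 0` (all defining polynomials have coefficients in `ℚ`). -/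
def YCurve : Set (ℂ × ℂ × ℂ × ℂ) :=
  {w | 4 + w.2.1 ^ 2 - w.2.2.1 ^ 2 = 0 ∧
       w.1 ^ 2 + w.2.1 * w.2.2.1 = 0 ∧
       w.1 ^ 2 + w.2.2.2 ^ 2 - 2 = 0}

/-- `T(x₁,x₂,x₃,x₄) = ((1+i)x₁, x₂ + i x₃, x₃ + i x₂, (1+i)x₄)`. -/
noncomputable def TMap : ℂ × ℂ × ℂ × ℂ → ℂ × ℂ × ℂ × ℂ :=
  fun p =>
    ((1 + Complex.I) * p.1, p.2.1 + Complex.I * p.2.2.1,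
     p.2.2.1 + Complex.I * p.2.1, (1 + Complex.I) * p.2.2.2)

/-- `S(w₁,w₂,w₃,w₄) = (w₁/(1+i), (w₂ − i w₃)/2, (w₃ − i w₂)/2, w₄/(1+i))`. -/
noncomputable def SMap : ℂ × ℂ × ℂ × ℂ → ℂ × ℂ × ℂ × ℂ :=
  fun w =>
    (w.1 / (1 + Complex.I), (w.2.1 - Complex.I * w.2.2.1) / 2,
     (w.2.2.1 - Complex.I * w.2.1) / 2, w.2.2.2 / (1 + Complex.I))

/-- `T` sends `X` into `Y`, `S` sends `Y` into `X`, and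
`S ∘ T = id`, `T ∘ S = id` on `ℂ⁴`; hence `T` restricts to a bijection from `X` onto `Y`,
exhibiting a model of `X` defined over `ℚ`. -/
theorem stmt13 :
    (∀ p ∈ XCurve, TMap p ∈ YCurve) ∧
    (∀ w ∈ YCurve, SMap w ∈ XCurve) ∧
    (∀ p : ℂ × ℂ × ℂ × ℂ, SMap (TMap p) = p) ∧
    (∀ w : ℂ × ℂ × ℂ × ℂ, TMap (SMap w) = w) ∧
    Set.BijOn TMap XCurve YCurve := by
  have hI : Complex.I ^ 2 = -1 := Complex.I_sq
  have hinv : (1 + Complex.I)⁻¹ = (1 - Complex.I) / 2 := by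
    apply inv_eq_of_mul_eq_one_right
    linear_combination (-1 / 2 : ℂ) * hI
  have h1 : ∀ p ∈ XCurve, TMap p ∈ YCurve := by
    rintro ⟨a, b, c, d⟩ ⟨h1, h2, h3⟩
    simp only at h1 h2 h3
    refine ⟨?_, ?_, ?_⟩ <;> simp only [TMap]
    · linear_combination 2 * h1 - 2 * h2 + (c ^ 2 - b ^ 2) * hI
    · linear_combination Complex.I * h1 + Complex.I * h2 + (a ^ 2 + b * c) * hI
    · linear_combination 2 * Complex.I * h3 + (a ^ 2 + d ^ 2 - 2) * hI
  have h2 : ∀ w ∈ YCurve, SMap w ∈ XCurve := by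
    rintro ⟨a, b, c, d⟩ ⟨h1, h2, h3⟩
    simp only at h1 h2 h3
    refine ⟨?_, ?_, ?_⟩ <;> simp only [SMap, div_eq_mul_inv _ (1 + Complex.I), hinv]
    · linear_combination (1 / 4) * h1 - Complex.I / 2 * h2 + (a ^ 2 / 4 + c ^ 2 / 4) * hI
    · linear_combination (-1 / 4) * h1 - Complex.I / 2 * h2 + (a ^ 2 / 4 + b ^ 2 / 4) * hI
    · linear_combination (-Complex.I / 2) * h3 + (a ^ 2 / 4 + d ^ 2 / 4) * hI
  have h3 : ∀ p : ℂ × ℂ × ℂ × ℂ, SMap (TMap p) = p := by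
    rintro ⟨a, b, c, d⟩
    simp only [SMap, TMap, div_eq_mul_inv _ (1 + Complex.I), hinv, Prod.mk.injEq]
    refine ⟨?_, ?_, ?_, ?_⟩
    · linear_combination (-a / 2) * hI
    · linear_combination (-b / 2) * hI
    · linear_combination (-c / 2) * hI
    · linear_combination (-d / 2) * hI
  have h4 : ∀ w : ℂ × ℂ × ℂ × ℂ, TMap (SMap w) = w := by
    rintro ⟨a, b, c, d⟩
    simp only [SMap, TMap, div_eq_mul_inv _ (1 + Complex.I), hinv, Prod.mk.injEq]
    refine ⟨?_, ?_, ?_, ?_⟩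
    · linear_combination (-a / 2) * hI
    · linear_combination (-b / 2) * hI
    · linear_combination (-c / 2) * hI
    · linear_combination (-d / 2) * hI
  refine ⟨h1, h2, h3, h4, h1, ?_, ?_⟩
  · intro x _ y _ hxy
    rw [← h3 x, ← h3 y, hxy]
  · intro w hw
    exact ⟨SMap w, h2 w hw, h4 w⟩
end
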